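/- Let (M, g) be an n-dimensional Lorentzian manifold (n ≥ 3) and ξ a unit timelike smooth vector field on M (g(ξ,ξ) = −1) with compact support conditions so that the vector field (div ξ)·ξ is compactly supported. Then the rate of volumetric expansion of the flow generated by ξ cannot be strictly increasing along its trajectories: it is impossible that L_ξ(div ξ) + (div ξ)² > 0 everywhere on M, and if L_ξ(div ξ) + (div ξ)² ≥ 0 everywhere then it vanishes identically; in particular, if L_ξ(div ξ) ≥ 0 everywhere then div ξ = 0 identically. -/

import Mathlib

open Manifold MeasureTheory

noncomputable section

/-- The Lie derivative of a real-valued function `f` along a vector field `ξ`: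
`(L_ξ f)(x) = df_x(ξ x)`. -/
def lieDerivFun {n : ℕ} {M : Type*} [TopologicalSpace M]
    [ChartedSpace (EuclideanSpace ℝ (Fin n)) M]
    (ξ : (x : M) → TangentSpace (𝓡 n) x) (f : M → ℝ) (x : M) : ℝ :=
  mfderiv (𝓡 n) 𝓘(ℝ) f x (ξ x)

/-- A smooth vector field on a manifold, i.e. a smooth section of the tangent bundle. -/
def SmoothVectorField {n : ℕ} {M : Type*} [TopologicalSpace M]
    [ChartedSpace (EuclideanSpace ℝ (Fin n)) M] [IsManifold (𝓡 n) (⊤ : ℕ∞) M]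
    (ξ : (x : M) → TangentSpace (𝓡 n) x) : Prop :=
  ContMDiff (𝓡 n) (𝓡 n).tangent (⊤ : ℕ∞) (fun x => (⟨x, ξ x⟩ : TangentBundle (𝓡 n) M))

/-- `IsLieDerivCoeffOf μ ξ h c` encodes, distributionally with respect to the positive
measure `μ` induced by the volume form `ω`, the identity `L_ξ (h·ω) = c·ω` for the Lie
derivative along `ξ`: by integration by parts this holds iff
`∫ ((L_ξ f)·h + f·c) dμ = 0` for every compactly supported smooth test function `f`. -/
def IsLieDerivCoeffOf {n : ℕ} {M : Type*} [TopologicalSpace M]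
    [ChartedSpace (EuclideanSpace ℝ (Fin n)) M] [IsManifold (𝓡 n) (⊤ : ℕ∞) M]
    [MeasurableSpace M] (μ : Measure M)
    (ξ : (x : M) → TangentSpace (𝓡 n) x) (h c : M → ℝ) : Prop :=
  ∀ f : M → ℝ, ContMDiff (𝓡 n) 𝓘(ℝ) (⊤ : ℕ∞) f → HasCompactSupport f →
    ∫ x, (lieDerivFun ξ f x * h x + f x * c x) ∂μ = 0

/-- `IsDivergenceOf μ ξ d` says that `d` is the divergence of `ξ` with respect to the
volume form inducing the measure `μ`, i.e. the unique smooth function with `L_ξ ω = d·ω`. -/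
def IsDivergenceOf {n : ℕ} {M : Type*} [TopologicalSpace M]
    [ChartedSpace (EuclideanSpace ℝ (Fin n)) M] [IsManifold (𝓡 n) (⊤ : ℕ∞) M]
    [MeasurableSpace M] (μ : Measure M)
    (ξ : (x : M) → TangentSpace (𝓡 n) x) (d : M → ℝ) : Prop :=
  ContMDiff (𝓡 n) 𝓘(ℝ) (⊤ : ℕ∞) d ∧ IsLieDerivCoeffOf μ ξ (fun _ => (1 : ℝ)) d

/-- A Lorentzian metric: a smooth symmetric field of bilinear forms on the tangent
spaces, of signature `(-,+,…,+)` (witnessed by a pseudo-orthonormal basis at each point). -/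
def IsLorentzMetric {n : ℕ} {M : Type*} [TopologicalSpace M]
    [ChartedSpace (EuclideanSpace ℝ (Fin n)) M] [IsManifold (𝓡 n) (⊤ : ℕ∞) M]
    (g : (x : M) → TangentSpace (𝓡 n) x → TangentSpace (𝓡 n) x → ℝ) : Prop :=
  (∀ x w, IsLinearMap ℝ (fun v => g x v w)) ∧
  (∀ x v, IsLinearMap ℝ (fun w => g x v w)) ∧
  (∀ x v w, g x v w = g x w v) ∧
  (∀ X Y : (x : M) → TangentSpace (𝓡 n) x, SmoothVectorField X → SmoothVectorField Y →
    ContMDiff (𝓡 n) 𝓘(ℝ) (⊤ : ℕ∞) (fun x => g x (X x) (Y x))) ∧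
  (∀ x : M, ∃ b : Module.Basis (Fin n) ℝ (TangentSpace (𝓡 n) x),
    ∀ i j, g x (b i) (b j) = if i = j then (if (i : ℕ) = 0 then (-1:ℝ) else 1) else 0)

/-!
Green's theorem for the field `(div ξ) • ξ` gives `∫ (L_ξ (div ξ) + (div ξ) ^ 2) = 0`, and a
continuous nonnegative function with zero integral vanishes. In the distributional formulation the
test function is `div ξ` itself, so one needs it to be compactly supported, and it is as soon as
`(div ξ) • ξ` is: if `(div ξ) • ξ` vanished near a point where `div ξ ≠ 0`, then so would `ξ`, and
hence `div ξ`.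
-/

open Function Filter Topology

theorem eq_zero_of_integral_eq_zero_of_hasCompactSupport_of_nonneg {X : Type*}
    [TopologicalSpace X] [MeasurableSpace X] [OpensMeasurableSpace X] {μ : Measure X}
    [μ.IsOpenPosMeasure] [IsFiniteMeasureOnCompacts μ] {f : X → ℝ} (hf : Continuous f)
    (hsupp : HasCompactSupport f) (hnonneg : 0 ≤ f) (hint : ∫ x, f x ∂μ = 0) : f = 0 := by
  ext x
  by_contra hx
  exact (hf.integral_pos_of_hasCompactSupport_nonneg_nonzero hsupp hnonneg hx).ne' hint

section LieDerivative

variable {n : ℕ} {M : Type*} [TopologicalSpace M] [ChartedSpace (EuclideanSpace ℝ (Fin n)) M]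
  {ξ : (x : M) → TangentSpace (𝓡 n) x} {f : M → ℝ}

theorem lieDerivFun_eq_zero_of_eq_zero {x : M} (hx : ξ x = 0) : lieDerivFun ξ f x = 0 := by
  rw [lieDerivFun, hx]
  exact map_zero (mfderiv (𝓡 n) 𝓘(ℝ) f x)

theorem lieDerivFun_eq_zero_of_notMem_tsupport {x : M} (hx : x ∉ tsupport f) :
    lieDerivFun ξ f x = 0 := by
  have hf : f =ᶠ[𝓝 x] fun _ => 0 := notMem_tsupport_iff_eventuallyEq.mp hx
  rw [lieDerivFun, hf.mfderiv_eq, mfderiv_const]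
  rfl

theorem hasCompactSupport_lieDerivFun (hf : HasCompactSupport f) :
    HasCompactSupport (lieDerivFun ξ f) :=
  hf.mono' fun _ hx => by_contra fun hxf => hx (lieDerivFun_eq_zero_of_notMem_tsupport hxf)

theorem continuous_lieDerivFun [IsManifold (𝓡 n) 1 M]
    (hξ : Continuous fun x => (⟨x, ξ x⟩ : TangentBundle (𝓡 n) M))
    (hf : ContMDiff (𝓡 n) 𝓘(ℝ) 1 f) : Continuous (lieDerivFun ξ f) := by
  have hdf : Continuous (tangentMap (𝓡 n) 𝓘(ℝ) f) := hf.continuous_tangentMap le_rfl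
  exact continuous_snd.comp
    ((tangentBundleModelSpaceHomeomorph 𝓘(ℝ)).continuous.comp (hdf.comp hξ))

end LieDerivative

namespace IsDivergenceOf

variable {n : ℕ} {M : Type*} [TopologicalSpace M] [ChartedSpace (EuclideanSpace ℝ (Fin n)) M]
  [IsManifold (𝓡 n) (⊤ : ℕ∞) M] [MeasurableSpace M] {μ : Measure M}
  {ξ : (x : M) → TangentSpace (𝓡 n) x} {d : M → ℝ}

theorem integral_mul_eq_zero_of_lieDerivFun_eq_zero (hd : IsDivergenceOf μ ξ d) {f : M → ℝ}
    (hf : ContMDiff (𝓡 n) 𝓘(ℝ) (⊤ : ℕ∞) f) (hsupp : HasCompactSupport f)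
    (hξf : ∀ x, lieDerivFun ξ f x = 0) : ∫ x, f x * d x ∂μ = 0 := by
  simpa only [hξf, zero_mul, zero_add] using hd.2 f hf hsupp

theorem integral_lieDerivFun_add_sq_eq_zero (hd : IsDivergenceOf μ ξ d)
    (hsupp : HasCompactSupport d) : ∫ x, (lieDerivFun ξ d x + d x ^ 2) ∂μ = 0 := by
  simpa only [mul_one, ← sq] using hd.2 d hd.1 hsupp

variable [OpensMeasurableSpace M] [μ.IsOpenPosMeasure] [IsFiniteMeasureOnCompacts μ]

theorem lieDerivFun_add_sq_eq_zero_of_nonneg (hd : IsDivergenceOf μ ξ d)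
    (hξ : Continuous fun x => (⟨x, ξ x⟩ : TangentBundle (𝓡 n) M)) (hsupp : HasCompactSupport d)
    (hnonneg : ∀ x, 0 ≤ lieDerivFun ξ d x + d x ^ 2) (x : M) :
    lieDerivFun ξ d x + d x ^ 2 = 0 := by
  have hcont : Continuous fun x => lieDerivFun ξ d x + d x ^ 2 :=
    (continuous_lieDerivFun hξ (hd.1.of_le (by simp))).add (hd.1.continuous.pow 2)
  have hcompact : HasCompactSupport fun x => lieDerivFun ξ d x + d x ^ 2 :=
    (hasCompactSupport_lieDerivFun hsupp).add (hsupp.comp_left (zero_pow two_ne_zero))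
  exact congrFun (eq_zero_of_integral_eq_zero_of_hasCompactSupport_of_nonneg hcont hcompact
    hnonneg (hd.integral_lieDerivFun_add_sq_eq_zero hsupp)) x

variable [T2Space M]

theorem eq_zero_of_eventually_eq_zero (hd : IsDivergenceOf μ ξ d) {x : M}
    (hξ : ∀ᶠ y in 𝓝 x, ξ y = 0) : d x = 0 := by
  -- Testing against `ρ * d`, for a bump function `ρ` at `x`, gives `∫ ρ * d ^ 2 = 0`.
  obtain ⟨ρ, -, hρ⟩ := (SmoothBumpFunction.nhds_basis_tsupport (I := 𝓡 n) x).mem_iff.mp hξ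
  have hρd : ContMDiff (𝓡 n) 𝓘(ℝ) (⊤ : ℕ∞) fun y => ρ y * d y := ρ.contMDiff.mul hd.1
  have hρd_supp : HasCompactSupport fun y => ρ y * d y := ρ.hasCompactSupport.mul_right
  have hξρd (y : M) : lieDerivFun ξ (fun y => ρ y * d y) y = 0 := by
    by_cases hy : y ∈ tsupport ρ
    · exact lieDerivFun_eq_zero_of_eq_zero (hρ hy)
    · exact lieDerivFun_eq_zero_of_notMem_tsupport fun h => hy (tsupport_mul_subset_left h)
  have hnonneg (y : M) : 0 ≤ ρ y * d y * d y := by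
    rw [mul_assoc]
    exact mul_nonneg ρ.nonneg (mul_self_nonneg (d y))
  have hzero : (fun y => ρ y * d y * d y) = 0 :=
    eq_zero_of_integral_eq_zero_of_hasCompactSupport_of_nonneg
      (hρd.continuous.mul hd.1.continuous) hρd_supp.mul_right hnonneg
      (hd.integral_mul_eq_zero_of_lieDerivFun_eq_zero hρd hρd_supp hξρd)
  simpa [ρ.eq_one] using congrFun hzero x

theorem support_subset_closure_smul_ne_zero (hd : IsDivergenceOf μ ξ d) :
    support d ⊆ closure {x | d x • ξ x ≠ 0} := by
  intro x hx
  by_contra hx_closure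
  have hdξ : ∀ᶠ y in 𝓝 x, d y • ξ y = 0 := by
    simpa only [mem_closure_iff_frequently, Set.mem_ofPred_eq, not_frequently, not_not]
      using hx_closure
  refine hx (hd.eq_zero_of_eventually_eq_zero ?_)
  filter_upwards [hdξ, hd.1.continuous.continuousAt.eventually_ne hx] with y hdξy hdy
  exact (smul_eq_zero.mp hdξy).resolve_left hdy

theorem hasCompactSupport_of_isCompact_closure_smul_ne_zero (hd : IsDivergenceOf μ ξ d)
    (hsupp : IsCompact (closure {x | d x • ξ x ≠ 0})) : HasCompactSupport d :=
  .of_support_subset_isCompact hsupp hd.support_subset_closure_smul_ne_zero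

end IsDivergenceOf

theorem stmt11_general {n : ℕ} {M : Type*} [TopologicalSpace M] [T2Space M] [Nonempty M]
    [ChartedSpace (EuclideanSpace ℝ (Fin n)) M] [IsManifold (𝓡 n) (⊤ : ℕ∞) M]
    [MeasurableSpace M] [OpensMeasurableSpace M] (μ : Measure M) [μ.IsOpenPosMeasure]
    [IsFiniteMeasureOnCompacts μ] (ξ : (x : M) → TangentSpace (𝓡 n) x)
    (hξ : Continuous fun x => (⟨x, ξ x⟩ : TangentBundle (𝓡 n) M)) (d : M → ℝ)
    (hd : IsDivergenceOf μ ξ d) (hsupp : IsCompact (closure {x | d x • ξ x ≠ 0})) :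
    (¬ ∀ x, 0 < lieDerivFun ξ d x + d x ^ 2) ∧
    ((∀ x, 0 ≤ lieDerivFun ξ d x + d x ^ 2) → ∀ x, lieDerivFun ξ d x + d x ^ 2 = 0) ∧
    ((∀ x, 0 ≤ lieDerivFun ξ d x) → ∀ x, d x = 0) := by
  have vanish := hd.lieDerivFun_add_sq_eq_zero_of_nonneg hξ
    (hd.hasCompactSupport_of_isCompact_closure_smul_ne_zero hsupp)
  refine ⟨fun hpos => ?_, vanish, fun hLie x => ?_⟩
  · obtain ⟨x⟩ := ‹Nonempty M›
    exact (hpos x).ne' (vanish (fun y => (hpos y).le) x)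
  · have hsum := vanish (fun y => add_nonneg (hLie y) (sq_nonneg (d y))) x
    have hsq : d x ^ 2 = 0 := ((add_eq_zero_iff_of_nonneg (hLie x) (sq_nonneg (d x))).mp hsum).2
    exact sq_eq_zero_iff.mp hsq

/-- On an `n`-dimensional Lorentzian manifold (`n ≥ 3`) with a unit
timelike smooth vector field `ξ` (`g(ξ,ξ) = -1`) such that `(div ξ)·ξ` is compactly
supported: the rate of volumetric expansion of the flow of `ξ` cannot be strictly
increasing, i.e. it is impossible that `L_ξ(div ξ) + (div ξ)² > 0` everywhere; if
`L_ξ(div ξ) + (div ξ)² ≥ 0` everywhere then it vanishes identically; and if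
`L_ξ(div ξ) ≥ 0` everywhere then `div ξ = 0` identically. -/
theorem stmt11
    {n : ℕ} (hn : 3 ≤ n)
    {M : Type*} [TopologicalSpace M] [T2Space M] [Nonempty M]
    [ChartedSpace (EuclideanSpace ℝ (Fin n)) M] [IsManifold (𝓡 n) (⊤ : ℕ∞) M]
    [MeasurableSpace M] [BorelSpace M]
    (g : (x : M) → TangentSpace (𝓡 n) x → TangentSpace (𝓡 n) x → ℝ)
    (hg : IsLorentzMetric g)
    -- the canonical Lorentzian volume measure of `(M, g)`
    (μ : Measure M) [Measure.IsOpenPosMeasure μ] [IsFiniteMeasureOnCompacts μ]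
    (ξ : (x : M) → TangentSpace (𝓡 n) x) (hξ : SmoothVectorField ξ)
    -- `ξ` is unit timelike
    (htime : ∀ x, g x (ξ x) (ξ x) = -1)
    (d : M → ℝ) (hd : IsDivergenceOf μ ξ d)
    -- the vector field `(div ξ)·ξ` is compactly supported
    (hsupp : IsCompact (closure {x : M | d x • ξ x ≠ 0})) :
    (¬ ∀ x, 0 < lieDerivFun ξ d x + d x ^ 2) ∧
    ((∀ x, 0 ≤ lieDerivFun ξ d x + d x ^ 2) → ∀ x, lieDerivFun ξ d x + d x ^ 2 = 0) ∧
    ((∀ x, 0 ≤ lieDerivFun ξ d x) → ∀ x, d x = 0) :=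
  stmt11_general μ ξ hξ.continuous d hd hsupp
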